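/- arXiv:1201.5979 — 2 statements merged into one kernel-verified Lean document; each statement's English description precedes it below -/
import Mathlib

section
/- (Mironov, rank 2, genus g) Let g ≥ 1 be an integer and α ∈ ℂ a nonzero constant. In the algebra of ℂ-linear endomorphisms of ℂ[x], define the operator L = (D² + X³ + α)² + g(g+1)X (an operator of order 4 with polynomial coefficients). Then there exist an ordinary differential operator M of order 4g + 2 with polynomial coefficients, i.e. M = Σ_{j=0}^{4g+2} P_j(X)∘D^j with each P_j ∈ ℂ[x] and P_{4g+2} ≠ 0, and constants a_0, …, a_{2g} ∈ ℂ such that L∘M = M∘L and M² = L^{2g+1} + a_{2g}·L^{2g} + … + a_1·L + a_0. -/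
open Polynomial Finset

/-- The differentiation operator on `ℂ[x]`, as a `ℂ`-linear endomorphism. -/
noncomputable def Dop : Module.End ℂ (Polynomial ℂ) := Polynomial.derivative

/-- The operator of multiplication by `x` on `ℂ[x]`, as a `ℂ`-linear endomorphism. -/
noncomputable def Xop : Module.End ℂ (Polynomial ℂ) := LinearMap.mulLeft ℂ Polynomial.X

/-!
Let `z` be a central variable and `L = (δ² + V)² + W`. If `e`, a polynomial in `z` whose
coefficients are functions, solves Mironov's fifth-order linear equation, then the pencil
`B(z) = 2e (δ² + V) - 2e' δ + e''` satisfies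
`[L, B(z)] = (8e' δ + 4e'') (L - z)` and `B(z)² = 4e² (L - z) + F(z)`,
where `F` is a first integral of the equation, hence a polynomial in `z` with constant
coefficients. Substituting `L` for `z` on the right kills right multiples of `L - z`, so
`M = B(L)` commutes with `L` and `M² = F(L)`.

For `V = x³ + α` and `W = g (g + 1) x` the equation becomes a recursion for the coefficients of the
powers of `x` in `e`. The factor `2 (2j + 1) (j (j + 1) - g (g + 1))` of the `j`-th coefficient
vanishes at `j = g`, which is what allows a solution that is polynomial in `x`. It has degree `g` in
`z` with constant leading coefficient, and normalising that coefficient to `1/2` makes `M` monic of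
order `4g + 2` and `F` monic of degree `2g + 1`.
-/

namespace Mironov

section Coeffwise

variable {R S : Type*} [CommRing R] [CommRing S] [Algebra R S] (D : Derivation R S S)

/-- The derivation of `S[X]` that applies `D` to every coefficient and kills `X`. -/
noncomputable def coeffwise : Derivation R S[X] S[X] :=
  PolynomialModule.equivPolynomialSelf.compDer D.mapCoeffs

@[simp]
theorem coeff_coeffwise (p : S[X]) (n : ℕ) : (coeffwise D p).coeff n = D (p.coeff n) := rfl

@[simp]
theorem coeffwise_C (a : S) : coeffwise D (C a) = C (D a) := by
  ext n
  cases n <;> simp [coeff_C]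

@[simp]
theorem coeffwise_X : coeffwise D X = 0 := by
  ext n
  simp [coeff_X, apply_ite D]

theorem natDegree_coeffwise_le (p : S[X]) : (coeffwise D p).natDegree ≤ p.natDegree :=
  natDegree_le_iff_coeff_eq_zero.2 fun n hn ↦ by
    rw [coeff_coeffwise, coeff_eq_zero_of_natDegree_lt hn, map_zero]

end Coeffwise

section DifferentialOperators

variable {R S E : Type*} [CommRing R] [CommRing S] [Algebra R S] [Ring E]
  {D : Derivation R S S} {ρ : S →+* E} {δ : E}

/-- The relation `δ ∘ a = a ∘ δ + D a` in a ring `E` to which the coefficients `a : S` are mapped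
by `ρ`. It makes the sums `∑ ρ aᵢ * δ ^ i` behave like differential operators over `(S, D)`. -/
def LeibnizRule (D : Derivation R S S) (ρ : S →+* E) (δ : E) : Prop :=
  ∀ a, δ * ρ a = ρ a * δ + ρ (D a)

/-- The operator `∑ aᵢ δ ^ i` with full symbol `∑ aᵢ X ^ i`. -/
noncomputable def ofSymbol (ρ : S →+* E) (δ : E) : S[X] →+ E := eval₂AddMonoidHom ρ δ

theorem ofSymbol_one : ofSymbol ρ δ 1 = 1 := eval₂_one ρ δ

theorem ofSymbol_monomial (n : ℕ) (a : S) : ofSymbol ρ δ (monomial n a) = ρ a * δ ^ n :=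
  eval₂_monomial ρ δ

theorem coeff_mul_ofSymbol (a : S) (p : S[X]) :
    ρ a * ofSymbol ρ δ p = ofSymbol ρ δ (C a * p) := by
  induction p using Polynomial.induction_on' with
  | add p q hp hq => simp only [map_add, mul_add, hp, hq]
  | monomial n b => simp only [C_mul_monomial, ofSymbol_monomial, map_mul, mul_assoc]

theorem LeibnizRule.mul_ofSymbol (h : LeibnizRule D ρ δ) (p : S[X]) :
    δ * ofSymbol ρ δ p = ofSymbol ρ δ (X * p + coeffwise D p) := by
  induction p using Polynomial.induction_on' with
  | add p q hp hq => simp only [map_add, mul_add, hp, hq]; abel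
  | monomial n b =>
    have hD : coeffwise D (monomial n b) = monomial n (D b) := by
      ext k
      simp [coeff_monomial, apply_ite D]
    rw [hD, X_mul_monomial, map_add]
    simp only [ofSymbol_monomial]
    rw [← mul_assoc, h b, add_mul, mul_assoc, ← pow_succ']

theorem LeibnizRule.polynomial (h : LeibnizRule D ρ δ) :
    LeibnizRule (coeffwise D) (mapRingHom ρ) (C δ) := fun p ↦ by
  ext n
  simpa using h (p.coeff n)

/-- The fourth-order operator `L = (δ² + V)² + W`. -/
def quarticOp (ρ : S →+* E) (δ : E) (V W : S) : E := (δ ^ 2 + ρ V) ^ 2 + ρ W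

/-- The second-order operator `2e (δ² + V) - 2e' δ + e''`, which for a suitable `e` is the partner
`B(z)` of `quarticOp`. -/
def companionOp (D : Derivation R S S) (ρ : S →+* E) (δ : E) (V e : S) : E :=
  ρ (2 * e) * (δ ^ 2 + ρ V) - ρ (2 * D e) * δ + ρ (D (D e))

/-- Mironov's fifth-order linear equation for `e`: the condition under which `companionOp`
commutes with `quarticOp` up to right multiples of `quarticOp - z`. -/
def CompanionEquation (D : Derivation R S S) (V W z e : S) : Prop :=
  D (D (D (D (D e)))) + 4 * V * D (D (D e)) + 6 * D V * D (D e) + 2 * D (D V) * D e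
    - 4 * (W - z) * D e - 2 * D W * e = 0

/-- The first integral of `CompanionEquation`. For `e` polynomial in `z` it is the polynomial `F(z)`
of the spectral curve `w² = F(z)`. -/
def spectralValue (D : Derivation R S S) (V W z e : S) : S :=
  4 * (z - W) * e ^ 2 - 4 * V * D e ^ 2 + D (D e) ^ 2 - 2 * D e * D (D (D e))
    + 2 * e * (2 * D V * D e + 4 * V * D (D e) + D (D (D (D e))))

theorem derivation_ofNat (D : Derivation R S S) (n : ℕ) [n.AtLeastTwo] :
    D (ofNat(n) : S) = 0 := D.map_natCast n

variable {V W z e : S}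

theorem CompanionEquation.map_spectralValue (he : CompanionEquation D V W z e) (hz : D z = 0) :
    D (spectralValue D V W z e) = 0 := by
  simp only [spectralValue, map_add, map_sub, Derivation.leibniz, Derivation.leibniz_pow,
    smul_eq_mul, derivation_ofNat, hz]
  rw [CompanionEquation] at he
  linear_combination 2 * e * he

theorem CompanionEquation.const_mul {c : S} (he : CompanionEquation D V W z e) (hc : D c = 0) :
    CompanionEquation D V W z (c * e) := by
  have hmul (a : S) : D (c * a) = c * D a := by simp [hc]
  rw [CompanionEquation] at he ⊢
  simp only [hmul]
  linear_combination c * he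

theorem LeibnizRule.commutator_companionOp (h : LeibnizRule D ρ δ)
    (he : CompanionEquation D V W z e) (hz : D z = 0) :
    quarticOp ρ δ V W * companionOp D ρ δ V e - companionOp D ρ δ V e * quarticOp ρ δ V W =
      (ρ (8 * D e) * δ + ρ (4 * D (D e))) * (quarticOp ρ δ V W - ρ z) := by
  have hC := congrArg (C : S → S[X]) he
  have hDC := congrArg (coeffwise D) hC
  -- Both sides are applied to the operator with symbol `1`: on symbols `δ` acts as `X + D`, so the
  -- claim becomes an identity in the commutative ring `S[X]`.
  rw [← mul_one (quarticOp ρ δ V W * _ - _), ← mul_one ((_ + _) * (quarticOp ρ δ V W - _)),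
    ← ofSymbol_one (ρ := ρ) (δ := δ)]
  simp only [quarticOp, companionOp, pow_two, add_mul, sub_mul, mul_assoc, coeff_mul_ofSymbol,
    h.mul_ofSymbol, ← map_add, ← map_sub]
  congr 1
  simp only [map_add, map_sub, map_mul, map_ofNat, Derivation.leibniz, coeffwise_C, coeffwise_X,
    smul_eq_mul, derivation_ofNat, hz, map_zero, Derivation.map_one_eq_zero] at hC hDC ⊢
  linear_combination hDC + 2 * X * hC

theorem LeibnizRule.companionOp_mul_self (h : LeibnizRule D ρ δ) :
    companionOp D ρ δ V e * companionOp D ρ δ V e =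
      ρ (4 * e ^ 2) * (quarticOp ρ δ V W - ρ z) + ρ (spectralValue D V W z e) := by
  rw [← mul_one (companionOp D ρ δ V e * _), ← mul_one (_ + ρ (spectralValue D V W z e)),
    ← ofSymbol_one (ρ := ρ) (δ := δ)]
  simp only [quarticOp, companionOp, pow_two, add_mul, sub_mul, mul_assoc, coeff_mul_ofSymbol,
    h.mul_ofSymbol, ← map_add, ← map_sub]
  congr 1
  simp only [spectralValue, map_add, map_sub, map_mul, map_ofNat, Derivation.leibniz,
    coeffwise_C, coeffwise_X, smul_eq_mul, derivation_ofNat, map_zero,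
    Derivation.map_one_eq_zero, map_pow]
  ring

/-- The operators `∑ i < n, ρ aᵢ * δ ^ i` of order less than `n`. -/
noncomputable def orderLT (ρ : S →+* E) (δ : E) (n : ℕ) : AddSubgroup E :=
  (degreeLT S n).toAddSubgroup.map (ofSymbol ρ δ)

theorem mem_orderLT {n : ℕ} {T : E} :
    T ∈ orderLT ρ δ n ↔ ∃ p : S[X], p.degree < n ∧ ofSymbol ρ δ p = T := by
  simp [orderLT, mem_degreeLT]

theorem exists_eq_sum_of_mem_orderLT {n : ℕ} {T : E} (hT : T ∈ orderLT ρ δ n) :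
    ∃ P : ℕ → S, T = ∑ i ∈ range n, ρ (P i) * δ ^ i := by
  obtain ⟨p, hp, rfl⟩ := mem_orderLT.1 hT
  have hsupp : p.support ⊆ range n := fun i hi ↦
    mem_range.2 (by exact_mod_cast (le_degree_of_mem_supp i hi).trans_lt hp)
  exact ⟨p.coeff, (eval₂_eq_sum).trans
    (sum_subset hsupp fun i _ hi ↦ by simp [notMem_support_iff.1 hi])⟩

theorem orderLT_mono {m n : ℕ} (hmn : m ≤ n) : orderLT ρ δ m ≤ orderLT ρ δ n :=
  AddSubgroup.map_mono (degreeLT_mono hmn)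

theorem coeff_mul_mem_orderLT (a : S) {n : ℕ} {T : E} (hT : T ∈ orderLT ρ δ n) :
    ρ a * T ∈ orderLT ρ δ n := by
  obtain ⟨p, hp, rfl⟩ := mem_orderLT.1 hT
  rw [← mem_degreeLT] at hp
  refine mem_orderLT.2 ⟨C a * p, ?_, (coeff_mul_ofSymbol a p).symm⟩
  rw [← smul_eq_C_mul]
  exact mem_degreeLT.1 (Submodule.smul_mem _ a hp)

theorem coeff_mul_pow_mem_orderLT (a : S) {j n : ℕ} (hj : j < n) :
    ρ a * δ ^ j ∈ orderLT ρ δ n :=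
  mem_orderLT.2 ⟨monomial j a, (degree_monomial_le j a).trans_lt (mod_cast hj),
    ofSymbol_monomial j a⟩

theorem coeff_mem_orderLT (a : S) {n : ℕ} (hn : 0 < n) : ρ a ∈ orderLT ρ δ n := by
  simpa using coeff_mul_pow_mem_orderLT (ρ := ρ) (δ := δ) a hn

theorem pow_mem_orderLT {j n : ℕ} (hj : j < n) : δ ^ j ∈ orderLT ρ δ n := by
  simpa using coeff_mul_pow_mem_orderLT (ρ := ρ) (δ := δ) 1 hj

theorem LeibnizRule.mul_mem_orderLT_succ (h : LeibnizRule D ρ δ) {n : ℕ} {T : E}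
    (hT : T ∈ orderLT ρ δ n) : δ * T ∈ orderLT ρ δ (n + 1) := by
  obtain ⟨p, hp, rfl⟩ := mem_orderLT.1 hT
  refine mem_orderLT.2 ⟨_, ?_, (h.mul_ofSymbol p).symm⟩
  rw [degree_lt_iff_coeff_zero] at hp ⊢
  rintro (_ | m) hm
  · omega
  · rw [coeff_add, coeff_X_mul, coeff_coeffwise, hp m (by omega), hp (m + 1) (by omega), map_zero,
      add_zero]

theorem LeibnizRule.pow_mul_mem_orderLT (h : LeibnizRule D ρ δ) (k : ℕ) {n : ℕ} {T : E}
    (hT : T ∈ orderLT ρ δ n) : δ ^ k * T ∈ orderLT ρ δ (n + k) := by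
  induction k with
  | zero => simpa using hT
  | succ k ih => simpa only [pow_succ', mul_assoc, add_assoc] using h.mul_mem_orderLT_succ ih

theorem LeibnizRule.mul_mem_orderLT (h : LeibnizRule D ρ δ) {m n : ℕ} {T U : E}
    (hT : T ∈ orderLT ρ δ m) (hU : U ∈ orderLT ρ δ (n + 1)) : T * U ∈ orderLT ρ δ (m + n) := by
  obtain ⟨P, rfl⟩ := exists_eq_sum_of_mem_orderLT hT
  rw [sum_mul]
  refine sum_mem fun i hi ↦ ?_
  have hi : i < m := mem_range.1 hi
  rw [mul_assoc]
  exact coeff_mul_mem_orderLT _ (orderLT_mono (by omega) (h.pow_mul_mem_orderLT i hU))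

/-- `T = δ ^ n + (terms of order less than n)`. -/
def IsMonicOfOrder (ρ : S →+* E) (δ : E) (n : ℕ) (T : E) : Prop := T - δ ^ n ∈ orderLT ρ δ n

theorem IsMonicOfOrder.mem_orderLT_succ {n : ℕ} {T : E} (hT : IsMonicOfOrder ρ δ n T) :
    T ∈ orderLT ρ δ (n + 1) := by
  simpa using add_mem (orderLT_mono n.le_succ hT) (pow_mem_orderLT n.lt_succ_self)

theorem IsMonicOfOrder.add {n : ℕ} {T U : E} (hT : IsMonicOfOrder ρ δ n T)
    (hU : U ∈ orderLT ρ δ n) : IsMonicOfOrder ρ δ n (T + U) := by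
  rw [IsMonicOfOrder, add_sub_right_comm]
  exact add_mem hT hU

theorem IsMonicOfOrder.exists_eq_sum {n : ℕ} {T : E} (hT : IsMonicOfOrder ρ δ n T) :
    ∃ P : ℕ → S, P n = 1 ∧ T = ∑ j ∈ range (n + 1), ρ (P j) * δ ^ j := by
  obtain ⟨P, hP⟩ := exists_eq_sum_of_mem_orderLT hT
  refine ⟨Function.update P n 1, Function.update_self n 1 P, ?_⟩
  have hlow : ∑ j ∈ range n, ρ (Function.update P n 1 j) * δ ^ j = T - δ ^ n := by
    rw [hP]
    exact sum_congr rfl fun j hj ↦ by rw [Function.update_of_ne (mem_range.1 hj).ne]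
  rw [sum_range_succ, hlow, Function.update_self, map_one, one_mul, sub_add_cancel]

theorem LeibnizRule.isMonicOfOrder_mul (h : LeibnizRule D ρ δ) {m n : ℕ} {T U : E}
    (hT : IsMonicOfOrder ρ δ m T) (hU : IsMonicOfOrder ρ δ n U) :
    IsMonicOfOrder ρ δ (m + n) (T * U) := by
  have hsplit : T * U - δ ^ (m + n) = (T - δ ^ m) * U + δ ^ m * (U - δ ^ n) := by
    rw [pow_add]; noncomm_ring
  rw [IsMonicOfOrder, hsplit]
  exact add_mem (h.mul_mem_orderLT hT hU.mem_orderLT_succ)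
    (add_comm n m ▸ h.pow_mul_mem_orderLT m hU)

theorem LeibnizRule.isMonicOfOrder_pow (h : LeibnizRule D ρ δ) {n : ℕ} {T : E}
    (hT : IsMonicOfOrder ρ δ n T) (k : ℕ) : IsMonicOfOrder ρ δ (n * k) (T ^ k) := by
  induction k with
  | zero => simp [IsMonicOfOrder]
  | succ k ih => simpa only [pow_succ, Nat.mul_succ] using h.isMonicOfOrder_mul ih hT

theorem isMonicOfOrder_sq_add : IsMonicOfOrder ρ δ 2 (δ ^ 2 + ρ V) := by
  simpa [IsMonicOfOrder] using coeff_mem_orderLT (ρ := ρ) (δ := δ) V two_pos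

theorem LeibnizRule.isMonicOfOrder_quarticOp (h : LeibnizRule D ρ δ) :
    IsMonicOfOrder ρ δ 4 (quarticOp ρ δ V W) :=
  (h.isMonicOfOrder_pow isMonicOfOrder_sq_add 2).add (coeff_mem_orderLT W four_pos)

theorem companionOp_sub_mem_orderLT :
    companionOp D ρ δ V e - ρ (2 * e) * (δ ^ 2 + ρ V) ∈ orderLT ρ δ 2 := by
  have hrest : companionOp D ρ δ V e - ρ (2 * e) * (δ ^ 2 + ρ V) =
      ρ (D (D e)) - ρ (2 * D e) * δ ^ 1 := by
    rw [companionOp, pow_one]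
    abel
  rw [hrest]
  exact sub_mem (coeff_mem_orderLT _ two_pos) (coeff_mul_pow_mem_orderLT _ one_lt_two)

theorem isMonicOfOrder_companionOp (he : 2 * e = 1) :
    IsMonicOfOrder ρ δ 2 (companionOp D ρ δ V e) := by
  have hlower := companionOp_sub_mem_orderLT (D := D) (ρ := ρ) (δ := δ) (V := V) (e := e)
  rw [he, map_one, one_mul] at hlower
  simpa using (isMonicOfOrder_sq_add (V := V)).add hlower

theorem companionOp_mem_orderLT : companionOp D ρ δ V e ∈ orderLT ρ δ 3 := by
  have hlead : ρ (2 * e) * (δ ^ 2 + ρ V) ∈ orderLT ρ δ 3 :=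
    coeff_mul_mem_orderLT _ isMonicOfOrder_sq_add.mem_orderLT_succ
  rw [← add_sub_cancel (ρ (2 * e) * (δ ^ 2 + ρ V)) (companionOp D ρ δ V e)]
  exact add_mem hlead (orderLT_mono (Nat.le_succ 2) companionOp_sub_mem_orderLT)

end DifferentialOperators

section RightEvaluation

variable {A : Type*} [Ring A]

theorem eval_mul_of_commute_eval {L : A} (p : A[X]) {q : A[X]} (hq : Commute (q.eval L) L) :
    (p * q).eval L = p.eval L * q.eval L := by
  induction p using Polynomial.induction_on' with
  | add p₁ p₂ h₁ h₂ => rw [add_mul, eval_add, h₁, h₂, eval_add, add_mul]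
  | monomial n a =>
    rw [← C_mul_X_pow_eq_monomial, mul_assoc, X_pow_mul, eval_C_mul, eval_mul_X_pow, eval_C_mul,
      eval_X_pow, mul_assoc, (hq.pow_right n).eq]

theorem eval_mul_C_sub_X (p : A[X]) (L : A) : (p * (C L - X)).eval L = 0 := by
  rw [← neg_sub X, mul_neg, eval_neg, eval_mul_X_sub_C, neg_zero]

theorem commute_eval_of_commutator_eq {L : A} {B Q : A[X]}
    (h : C L * B - B * C L = Q * (C L - X)) : Commute L (B.eval L) := by
  have hL := congrArg (eval L) h
  rwa [eval_mul_C_sub_X, eval_sub, eval_C_mul, eval_mul_of_commute_eval B (by simp), eval_C,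
    sub_eq_zero] at hL

end RightEvaluation

section CommutingOperator

variable {R S A : Type*} [CommRing R] [CommRing S] [Algebra R S] [Ring A]
  {D : Derivation R S S} {ρ : S →+* A} {δ : A} {V W : S} {e : S[X]}

/-- The operator obtained from the pencil `B(z) = 2e (δ² + V) - 2e' δ + e''`, where `e` is a
polynomial in `z`, by substituting `L = (δ² + V)² + W` for `z` on the right. -/
noncomputable def commutingOp (D : Derivation R S S) (ρ : S →+* A) (δ : A) (V W : S) (e : S[X]) :
    A :=
  (companionOp (coeffwise D) (mapRingHom ρ) (C δ) (C V) e).eval (quarticOp ρ δ V W)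

theorem quarticOp_polynomial :
    quarticOp (mapRingHom ρ) (C δ) (C V) (C W) = C (quarticOp ρ δ V W) := by
  simp [quarticOp]

theorem LeibnizRule.commute_commutingOp (h : LeibnizRule D ρ δ)
    (he : CompanionEquation (coeffwise D) (C V) (C W) X e) :
    Commute (quarticOp ρ δ V W) (commutingOp D ρ δ V W e) := by
  have hcomm := h.polynomial.commutator_companionOp he (coeffwise_X D)
  rw [quarticOp_polynomial, coe_mapRingHom, map_X] at hcomm
  exact commute_eval_of_commutator_eq hcomm

theorem LeibnizRule.commutingOp_sq (h : LeibnizRule D ρ δ)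
    (he : CompanionEquation (coeffwise D) (C V) (C W) X e) :
    commutingOp D ρ δ V W e ^ 2 =
      (spectralValue (coeffwise D) (C V) (C W) X e).eval₂ ρ (quarticOp ρ δ V W) := by
  have hsq := congrArg (eval (quarticOp ρ δ V W))
    (h.polynomial.companionOp_mul_self (V := C V) (W := C W) (z := X) (e := e))
  rw [quarticOp_polynomial, eval_mul_of_commute_eval _ (h.commute_commutingOp he).symm, eval_add,
    coe_mapRingHom, map_X, eval_mul_C_sub_X, zero_add, eval_map] at hsq
  rw [sq]
  exact hsq

theorem coeff_companionOp (m : ℕ) :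
    (companionOp (coeffwise D) (mapRingHom ρ) (C δ) (C V) e).coeff m =
      companionOp D ρ δ V (e.coeff m) := by
  simp only [companionOp, ← C_pow, coe_mapRingHom, coeff_add, coeff_sub, coeff_map,
    coeff_coeffwise, map_C, ← C_add, coeff_mul_C, ← map_ofNat C 2, coeff_C_mul]

theorem LeibnizRule.isMonicOfOrder_commutingOp (h : LeibnizRule D ρ δ) {g : ℕ}
    (hdeg : e.natDegree ≤ g) (hlead : 2 * e.coeff g = 1) :
    IsMonicOfOrder ρ δ (4 * g + 2) (commutingOp D ρ δ V W e) := by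
  have hB : (companionOp (coeffwise D) (mapRingHom ρ) (C δ) (C V) e).natDegree < g + 1 := by
    rw [Nat.lt_succ_iff, natDegree_le_iff_coeff_eq_zero]
    intro m hm
    rw [coeff_companionOp, coeff_eq_zero_of_natDegree_lt (hdeg.trans_lt hm)]
    simp [companionOp]
  have hL : IsMonicOfOrder ρ δ 4 (quarticOp ρ δ V W) := h.isMonicOfOrder_quarticOp
  rw [commutingOp, eval_eq_sum_range' hB, sum_range_succ, add_comm (∑ _ ∈ _, _), add_comm (4 * g)]
  simp only [coeff_companionOp]
  refine (h.isMonicOfOrder_mul (isMonicOfOrder_companionOp hlead)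
    (h.isMonicOfOrder_pow hL g)).add (sum_mem fun m hm ↦ ?_)
  have hm : m < g := mem_range.1 hm
  exact orderLT_mono (by omega)
    (h.mul_mem_orderLT companionOp_mem_orderLT (h.isMonicOfOrder_pow hL m).mem_orderLT_succ)

theorem natDegree_spectralValue_zero_le {g : ℕ} (hdeg : e.natDegree ≤ g) :
    (spectralValue (coeffwise D) (C V) (C W) 0 e).natDegree ≤ 2 * g := by
  have hD {p : S[X]} (hp : p.natDegree ≤ g) : (coeffwise D p).natDegree ≤ g :=
    (natDegree_coeffwise_le D p).trans hp
  have hmul (c : S) {p q : S[X]} (hp : p.natDegree ≤ g) (hq : q.natDegree ≤ g) :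
      C c * (p * q) ∈ degreeLE S (2 * g : ℕ) := by
    rw [mem_degreeLE, ← natDegree_le_iff_degree_le, two_mul]
    exact (natDegree_C_mul_le _ _).trans (natDegree_mul_le_of_le hp hq)
  have h₁ := hD hdeg
  have h₂ := hD h₁
  have h₃ := hD h₂
  have h₄ := hD h₃
  have hexpand : spectralValue (coeffwise D) (C V) (C W) 0 e =
      C (-4 * W) * (e * e) - C (4 * V) * (coeffwise D e * coeffwise D e)
        + C 1 * (coeffwise D (coeffwise D e) * coeffwise D (coeffwise D e))
        - C 2 * (coeffwise D e * coeffwise D (coeffwise D (coeffwise D e)))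
        + C (4 * D V) * (e * coeffwise D e) + C (8 * V) * (e * coeffwise D (coeffwise D e))
        + C 2 * (e * coeffwise D (coeffwise D (coeffwise D (coeffwise D e)))) := by
    simp only [spectralValue, coeffwise_C, map_mul, map_neg, map_ofNat, map_one]
    ring
  rw [natDegree_le_iff_degree_le, ← mem_degreeLE, hexpand]
  exact add_mem (add_mem (add_mem (sub_mem (add_mem (sub_mem (hmul _ hdeg hdeg) (hmul _ h₁ h₁))
    (hmul _ h₂ h₂)) (hmul _ h₁ h₃)) (hmul _ hdeg h₁)) (hmul _ hdeg h₂)) (hmul _ hdeg h₄)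

theorem spectralValue_eq_add (D : Derivation R S S) (V W z e : S) :
    spectralValue D V W z e = z * (2 * e) ^ 2 + spectralValue D V W 0 e := by
  unfold spectralValue
  ring

theorem natDegree_spectralValue_le {g : ℕ} (hdeg : e.natDegree ≤ g) :
    (spectralValue (coeffwise D) (C V) (C W) X e).natDegree ≤ 2 * g + 1 := by
  have h2e : (2 * e).natDegree ≤ g := (natDegree_C_mul_le 2 e).trans hdeg
  have hlead : (X * (2 * e) ^ 2).natDegree ≤ 2 * g + 1 :=
    (natDegree_mul_le_of_le natDegree_X_le (natDegree_pow_le_of_le 2 h2e)).trans_eq (add_comm _ _)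
  rw [spectralValue_eq_add]
  exact natDegree_add_le_of_degree_le hlead
    ((natDegree_spectralValue_zero_le hdeg).trans (Nat.le_succ _))

theorem coeff_spectralValue {g : ℕ} (hdeg : e.natDegree ≤ g) (hlead : 2 * e.coeff g = 1) :
    (spectralValue (coeffwise D) (C V) (C W) X e).coeff (2 * g + 1) = 1 := by
  have h2e : (2 * e).natDegree ≤ g := (natDegree_C_mul_le 2 e).trans hdeg
  have h2e_lead : (2 * e).coeff g = 1 := (coeff_C_mul e).trans hlead
  have hrest : (spectralValue (coeffwise D) (C V) (C W) 0 e).natDegree < 2 * g + 1 :=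
    Nat.lt_succ_of_le (natDegree_spectralValue_zero_le hdeg)
  rw [spectralValue_eq_add, coeff_add, coeff_X_mul, coeff_eq_zero_of_natDegree_lt hrest, add_zero,
    coeff_pow_of_natDegree_le h2e, h2e_lead, one_pow]

theorem companionEquation_of_coeff
    (he : ∀ m, D (D (D (D (D (e.coeff m))))) + 4 * V * D (D (D (e.coeff m)))
      + 6 * D V * D (D (e.coeff m)) + 2 * D (D V) * D (e.coeff m) - 4 * W * D (e.coeff m)
      - 2 * D W * e.coeff m + 4 * D ((X * e).coeff m) = 0) :
    CompanionEquation (coeffwise D) (C V) (C W) X e := by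
  ext m
  have hexpand : coeffwise D (coeffwise D (coeffwise D (coeffwise D (coeffwise D e))))
        + 4 * C V * coeffwise D (coeffwise D (coeffwise D e))
        + 6 * coeffwise D (C V) * coeffwise D (coeffwise D e)
        + 2 * coeffwise D (coeffwise D (C V)) * coeffwise D e
        - 4 * (C W - X) * coeffwise D e - 2 * coeffwise D (C W) * e =
      coeffwise D (coeffwise D (coeffwise D (coeffwise D (coeffwise D e))))
        + C (4 * V) * coeffwise D (coeffwise D (coeffwise D e))
        + C (6 * D V) * coeffwise D (coeffwise D e) + C (2 * D (D V)) * coeffwise D e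
        - C (4 * W) * coeffwise D e - C (2 * D W) * e + C 4 * coeffwise D (X * e) := by
    simp only [coeffwise_C, coeffwise_X, Derivation.leibniz, smul_eq_mul, map_mul, map_ofNat]
    ring
  rw [hexpand]
  simpa only [coeff_add, coeff_sub, coeff_C_mul, coeff_coeffwise, coeff_zero] using he m

end CommutingOperator

section PolynomialSolution

theorem coeff_cubic_companion {R : Type*} [CommRing R] (α c : R) (f h : R[X]) (j : ℕ) :
    (derivative (derivative (derivative (derivative (derivative f))))
        + 4 * (X ^ 3 + C α) * derivative (derivative (derivative f))
        + 6 * derivative (X ^ 3 + C α) * derivative (derivative f)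
        + 2 * derivative (derivative (X ^ 3 + C α)) * derivative f
        - 4 * (C c * X) * derivative f - 2 * derivative (C c * X) * f + 4 * derivative h).coeff j =
      (j + 5) * (j + 4) * (j + 3) * (j + 2) * (j + 1) * f.coeff (j + 5)
        + 4 * α * ((j + 3) * (j + 2) * (j + 1)) * f.coeff (j + 3)
        + 2 * (2 * j + 1) * (j * (j + 1) - c) * f.coeff j + 4 * (j + 1) * h.coeff (j + 1) := by
  have hV : derivative (X ^ 3 + C α) = C 3 * X ^ 2 := by
    rw [derivative_add, derivative_X_pow, derivative_C, add_zero, Nat.cast_ofNat]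
  have hV' : derivative (C 3 * X ^ 2 : R[X]) = C 6 * X := by
    rw [derivative_C_mul, derivative_X_sq, ← mul_assoc, ← C_mul]
    norm_num
  have hexpand : derivative (derivative (derivative (derivative (derivative f))))
        + 4 * (X ^ 3 + C α) * derivative (derivative (derivative f))
        + 6 * (C 3 * X ^ 2) * derivative (derivative f) + 2 * (C 6 * X) * derivative f
        - 4 * (C c * X) * derivative f - 2 * (C c * 1) * f + 4 * derivative h =
      derivative (derivative (derivative (derivative (derivative f))))
        + C 4 * (X ^ 3 * derivative (derivative (derivative f)))
        + C (4 * α) * derivative (derivative (derivative f))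
        + C 18 * (X ^ 2 * derivative (derivative f)) + C (12 - 4 * c) * (X ^ 1 * derivative f)
        - C (2 * c) * f + C 4 * derivative h := by
    simp only [map_mul, map_sub, map_ofNat]
    ring
  rw [hV, hV', derivative_C_mul, derivative_X, hexpand]
  simp only [coeff_add, coeff_sub, coeff_C_mul, coeff_X_pow_mul', coeff_derivative]
  rcases j with _ | _ | _ | j <;>
  · norm_num [add_assoc]
    ring

variable {K : Type*} [Field K]

/-- The coefficient of `x ^ j`, a polynomial in `z = X`, of the solution `e` of `CompanionEquation`
for `V = x³ + α` and `W = g (g + 1) x` in which `x ^ g` is the highest power of `x` and has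
coefficient `1`. The recursion is downward in `j` and is obtained by comparing coefficients in the
equation. -/
noncomputable def solutionCoeff (α : K) (g j : ℕ) : K[X] :=
  if g < j then 0 else if j = g then 1 else
    C (2 * (2 * j + 1) * (g * (g + 1) - j * (j + 1)) : K)⁻¹ *
      (C (4 * (j + 1) : K) * (X * solutionCoeff α g (j + 1))
        + C (4 * α * ((j + 3) * (j + 2) * (j + 1))) * solutionCoeff α g (j + 3)
        + C ((j + 5) * (j + 4) * (j + 3) * (j + 2) * (j + 1) : K) * solutionCoeff α g (j + 5))
termination_by g - j

theorem solutionCoeff_of_lt (α : K) {g j : ℕ} (h : g < j) : solutionCoeff α g j = 0 := by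
  rw [solutionCoeff, if_pos h]

theorem solutionCoeff_self (α : K) (g : ℕ) : solutionCoeff α g g = 1 := by
  rw [solutionCoeff, if_neg (lt_irrefl g), if_pos rfl]

theorem coeff_solutionCoeff_of_lt (α : K) {g j m : ℕ} (h : g < j + m) :
    (solutionCoeff α g j).coeff m = 0 := by
  fun_induction solutionCoeff α g j generalizing m with
  | case1 => exact coeff_zero m
  | case2 => rw [coeff_one, if_neg (by omega)]
  | case3 j _ _ ih₁ ih₃ ih₅ =>
    obtain ⟨m, rfl⟩ : ∃ k, m = k + 1 := ⟨m - 1, by omega⟩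
    simp only [coeff_C_mul, coeff_add, coeff_X_mul, ih₁ (m := m) (by omega),
      ih₃ (m := m + 1) (by omega), ih₅ (m := m + 1) (by omega), mul_zero, add_zero]

/-- The solution of `CompanionEquation` for `V = x³ + α` and `W = g (g + 1) x`, with coefficients
`solutionCoeff α g j` at `x ^ j`. The outer variable of `K[X][X]` is `z`, the inner one is `x`. -/
noncomputable def solution (α : K) (g : ℕ) : K[X][X] :=
  ∑ j ∈ range (g + 1), C (X ^ j) * (solutionCoeff α g j).map C

theorem coeff_coeff_solution (α : K) (g m j : ℕ) :
    ((solution α g).coeff m).coeff j = (solutionCoeff α g j).coeff m := by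
  simp only [solution, finsetSum_coeff, coeff_C_mul, coeff_map, coeff_mul_C, coeff_X_pow,
    ite_mul, one_mul, zero_mul, Finset.sum_ite_eq, mem_range]
  split_ifs with h
  · rfl
  · rw [solutionCoeff_of_lt α (by omega), coeff_zero]

theorem coeff_X_mul_solution (α : K) (g m j : ℕ) :
    ((X * solution α g).coeff m).coeff j = (X * solutionCoeff α g j).coeff m := by
  cases m <;> simp [coeff_coeff_solution]

theorem natDegree_solution_le (α : K) (g : ℕ) : (solution α g).natDegree ≤ g :=
  natDegree_le_iff_coeff_eq_zero.2 fun m hm ↦ by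
    ext j
    rw [coeff_coeff_solution, coeff_solutionCoeff_of_lt α (by omega), coeff_zero]

theorem coeff_solution_self (α : K) (g : ℕ) :
    (solution α g).coeff g = C ((solutionCoeff α g 0).coeff g) := by
  ext (_ | j)
  · rw [coeff_coeff_solution, coeff_C_zero]
  · rw [coeff_coeff_solution, coeff_C_succ, coeff_solutionCoeff_of_lt α (by omega)]

variable [CharZero K]

theorem recursion_factor_ne_zero {g j : ℕ} (h : j < g) :
    (2 * (2 * j + 1) * (g * (g + 1) - j * (j + 1)) : K) ≠ 0 := by
  obtain ⟨k, rfl⟩ := Nat.exists_eq_add_of_lt h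
  have hcast : (2 * (2 * j + 1) * ((j + k + 1 : ℕ) * ((j + k + 1 : ℕ) + 1) - j * (j + 1)) : K) =
      (2 * (2 * j + 1) * ((k + 1) * (2 * j + k + 2)) : ℕ) := by
    push_cast
    ring
  rw [hcast, Nat.cast_ne_zero]
  positivity

theorem solutionCoeff_recursion (α : K) (g j : ℕ) :
    C (2 * (2 * j + 1) * (g * (g + 1) - j * (j + 1)) : K) * solutionCoeff α g j =
      C (4 * (j + 1) : K) * (X * solutionCoeff α g (j + 1))
        + C (4 * α * ((j + 3) * (j + 2) * (j + 1))) * solutionCoeff α g (j + 3)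
        + C ((j + 5) * (j + 4) * (j + 3) * (j + 2) * (j + 1) : K) * solutionCoeff α g (j + 5) := by
  rcases lt_or_ge j g with hj | hj
  · rw [solutionCoeff.eq_def α g j, if_neg (by omega), if_neg (by omega), ← mul_assoc, ← C_mul,
      mul_inv_cancel₀ (recursion_factor_ne_zero hj), C_1, one_mul]
  · rw [solutionCoeff_of_lt α (j := j + 1) (by omega),
      solutionCoeff_of_lt α (j := j + 3) (by omega),
      solutionCoeff_of_lt α (j := j + 5) (by omega)]
    rcases hj.eq_or_lt with rfl | hj
    · simp
    · simp [solutionCoeff_of_lt α hj]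

theorem coeff_solutionCoeff_ne_zero (α : K) {g j m : ℕ} (h : j + m = g) :
    (solutionCoeff α g j).coeff m ≠ 0 := by
  induction m generalizing j with
  | zero => simp [← h, solutionCoeff_self]
  | succ m ih =>
    intro hzero
    have hrec := congrArg (fun p : K[X] ↦ p.coeff (m + 1)) (solutionCoeff_recursion α g j)
    simp only [coeff_add, coeff_C_mul, coeff_X_mul, hzero, mul_zero, add_zero,
      coeff_solutionCoeff_of_lt α (show g < j + 3 + (m + 1) by omega),
      coeff_solutionCoeff_of_lt α (show g < j + 5 + (m + 1) by omega)] at hrec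
    have hfactor : (4 * (j + 1) : K) ≠ 0 := mul_ne_zero (by norm_num) j.cast_add_one_ne_zero
    exact mul_ne_zero hfactor (ih (by omega)) hrec.symm

theorem companionEquation_solution (α : K) (g : ℕ) :
    CompanionEquation (coeffwise (derivative' (R := K))) (C (X ^ 3 + C α))
      (C (C (g * (g + 1) : K) * X)) X (solution α g) := by
  refine companionEquation_of_coeff fun m ↦ ?_
  ext j
  have hrec := congrArg (fun p : K[X] ↦ p.coeff m) (solutionCoeff_recursion α g j)
  simp only [coeff_add, coeff_C_mul, ← coeff_X_mul_solution, ← coeff_coeff_solution] at hrec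
  refine (coeff_cubic_companion α _ _ _ j).trans ?_
  rw [coeff_zero]
  linear_combination -hrec

theorem exists_companionEquation (α : K) (g : ℕ) :
    ∃ e : K[X][X], e.natDegree ≤ g ∧ 2 * e.coeff g = 1 ∧
      CompanionEquation (coeffwise (derivative' (R := K))) (C (X ^ 3 + C α))
        (C (C (g * (g + 1) : K) * X)) X e := by
  have hlead : 2 * (solutionCoeff α g 0).coeff g ≠ 0 :=
    mul_ne_zero two_ne_zero (coeff_solutionCoeff_ne_zero α (zero_add g))
  set c := (2 * (solutionCoeff α g 0).coeff g)⁻¹ with hc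
  refine ⟨C (C c) * solution α g, (natDegree_C_mul_le _ _).trans (natDegree_solution_le α g), ?_,
    (companionEquation_solution α g).const_mul (by simp)⟩
  rw [coeff_C_mul, coeff_solution_self, ← map_ofNat C 2, ← C_mul, ← C_mul, mul_left_comm, hc,
    inv_mul_cancel₀ hlead, C_1]

end PolynomialSolution

section WeylRelation

variable {R A : Type*} [CommRing R] [Ring A] [Algebra R A] {d x : A}

theorem leibnizRule_aeval (hdx : d * x = x * d + 1) :
    LeibnizRule (derivative' (R := R)) (aeval x : R[X] →ₐ[R] A).toRingHom d := fun p ↦ by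
  change d * aeval x p = aeval x p * d + aeval x (derivative p)
  induction p using Polynomial.induction_on with
  | C a => simp [Algebra.commutes]
  | add p q hp hq => simp only [map_add, mul_add, add_mul, hp, hq]; abel
  | monomial n a ih =>
    rw [pow_succ, ← mul_assoc]
    generalize C a * X ^ n = q at ih ⊢
    rw [derivative_mul, derivative_X, mul_one, map_add, map_mul, map_mul, aeval_X, ← mul_assoc, ih,
      add_mul, mul_assoc, hdx, mul_add, mul_one, mul_assoc]
    abel

theorem exists_map_C_eq_of_coeffwise_derivative_eq_zero [IsAddTorsionFree R] {F : R[X][X]}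
    (hF : coeffwise (derivative' (R := R)) F = 0) : ∃ p : R[X], p.map C = F := by
  refine ⟨F.map constantCoeff, ?_⟩
  ext1 i
  have hi : derivative (F.coeff i) = 0 := congrArg (coeff · i) hF
  rw [coeff_map, coeff_map, constantCoeff_apply,
    ← eq_C_of_natDegree_eq_zero (derivative_eq_zero.1 hi)]

theorem exists_map_C_eq_spectralValue [IsAddTorsionFree R] {V W : R[X]} {e : R[X][X]} {g : ℕ}
    (he : CompanionEquation (coeffwise (derivative' (R := R))) (C V) (C W) X e)
    (hdeg : e.natDegree ≤ g) (hlead : 2 * e.coeff g = 1) :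
    ∃ p : R[X], p.natDegree ≤ 2 * g + 1 ∧ p.coeff (2 * g + 1) = 1 ∧
      p.map C = spectralValue (coeffwise (derivative' (R := R))) (C V) (C W) X e := by
  obtain ⟨p, hp⟩ := exists_map_C_eq_of_coeffwise_derivative_eq_zero
    (he.map_spectralValue (coeffwise_X _))
  refine ⟨p, ?_, ?_, hp⟩
  · rw [← natDegree_map_eq_of_injective C_injective p, hp]
    exact natDegree_spectralValue_le hdeg
  · rw [← C_inj, ← coeff_map, hp, coeff_spectralValue hdeg hlead, C_1]

theorem quarticOp_aeval (α c : R) :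
    quarticOp (aeval x : R[X] →ₐ[R] A).toRingHom d (X ^ 3 + C α) (C c * X) =
      (d ^ 2 + x ^ 3 + α • (1 : A)) ^ 2 + c • x := by
  simp [quarticOp, Algebra.smul_def, add_assoc]

theorem aeval_eq_pow_add_sum {p : R[X]} {n : ℕ} (hdeg : p.natDegree ≤ n) (hlead : p.coeff n = 1)
    (L : A) : aeval L p = L ^ n + ∑ i ∈ range n, p.coeff i • L ^ i := by
  rw [aeval_eq_sum_range' (Nat.lt_succ_of_le hdeg), sum_range_succ, hlead, one_smul, add_comm]

end WeylRelation

theorem Dop_mul_Xop : Dop * Xop = Xop * Dop + 1 := by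
  refine LinearMap.ext fun p ↦ ?_
  rw [Module.End.mul_apply, LinearMap.add_apply, Module.End.mul_apply, Module.End.one_apply, Xop,
    LinearMap.mulLeft_apply, LinearMap.mulLeft_apply, Dop, derivative_mul, derivative_X, one_mul,
    add_comm]

theorem aeval_Xop (p : ℂ[X]) : aeval Xop p = LinearMap.mulLeft ℂ p := by
  have h := aeval_algHom_apply (Algebra.lmul ℂ ℂ[X]) X p
  rwa [aeval_X_left_apply] at h

end Mironov

open Mironov

theorem mironov_rank2_general {K A : Type*} [Field K] [CharZero K] [Ring A] [Algebra K A]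
    {d x : A} (hdx : d * x = x * d + 1) (g : ℕ) (α : K) :
    letI L : A := (d ^ 2 + x ^ 3 + α • (1 : A)) ^ 2 + ((g : K) * ((g : K) + 1)) • x
    ∃ (M : A) (P : ℕ → K[X]) (a : ℕ → K),
      M = ∑ j ∈ range (4 * g + 2 + 1), aeval x (P j) * d ^ j ∧
      P (4 * g + 2) = 1 ∧
      L * M = M * L ∧
      M ^ 2 = L ^ (2 * g + 1) + ∑ i ∈ range (2 * g + 1), a i • L ^ i := by
  obtain ⟨e, hdeg, hlead, he⟩ := exists_companionEquation α g
  obtain ⟨p, hpdeg, hplead, hp⟩ := exists_map_C_eq_spectralValue he hdeg hlead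
  have hδ := leibnizRule_aeval (R := K) hdx
  obtain ⟨P, hPlead, hP⟩ := (hδ.isMonicOfOrder_commutingOp (V := X ^ 3 + C α)
    (W := C (g * (g + 1) : K) * X) hdeg hlead).exists_eq_sum
  rw [← quarticOp_aeval]
  refine ⟨_, P, p.coeff, hP, hPlead, hδ.commute_commutingOp he, ?_⟩
  rw [hδ.commutingOp_sq he, ← hp, eval₂_map, ← aeval_eq_pow_add_sum hpdeg hplead, aeval_def]
  exact congrArg (eval₂ · _ p) (aeval x).comp_algebraMap

/-- Mironov's commuting operators of rank 2 and genus `g`: for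
`L = (D² + X³ + α)² + g(g+1)X` there is an operator `M` of order `4g + 2` with
polynomial coefficients and constants `a₀, …, a_{2g}` such that `L∘M = M∘L` and
`M² = L^{2g+1} + a_{2g}·L^{2g} + … + a₁·L + a₀`. -/
theorem mironov_rank2 (g : ℕ) (hg : 1 ≤ g) (α : ℂ) (hα : α ≠ 0) :
    letI one : Module.End ℂ (Polynomial ℂ) := 1
    letI L : Module.End ℂ (Polynomial ℂ) :=
      (Dop ^ 2 + Xop ^ 3 + α • one) ^ 2 + ((g : ℂ) * ((g : ℂ) + 1)) • Xop
    ∃ (M : Module.End ℂ (Polynomial ℂ)) (P : ℕ → Polynomial ℂ) (a : ℕ → ℂ),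
      M = ∑ j ∈ Finset.range (4 * g + 2 + 1), LinearMap.mulLeft ℂ (P j) * Dop ^ j ∧
      P (4 * g + 2) ≠ 0 ∧
      L * M = M * L ∧
      M ^ 2 = L ^ (2 * g + 1) + ∑ i ∈ Finset.range (2 * g + 1), a i • L ^ i := by
  obtain ⟨M, P, a, hM, hlead, hcomm, hsq⟩ := mironov_rank2_general Dop_mul_Xop g α
  simp only [aeval_Xop] at hM
  exact ⟨M, P, a, hM, hlead ▸ one_ne_zero, hcomm, hsq⟩
end

section
/- (Mironov, rank 3, genus g) Let g ≥ 1 be an integer and α ∈ ℂ a nonzero constant. In the algebra of ℂ-linear endomorphisms of ℂ[x], define the operator L = (D³ + X² + α)² + g(g+1)D (an operator of order 6 with polynomial coefficients). Then there exist an ordinary differential operator M of order 6g + 3 with polynomial coefficients, i.e. M = Σ_{j=0}^{6g+3} P_j(X)∘D^j with each P_j ∈ ℂ[x] and P_{6g+3} ≠ 0, and constants a_0, …, a_{2g} ∈ ℂ such that L∘M = M∘L and M² = L^{2g+1} + a_{2g}·L^{2g} + … + a_1·L + a_0. -/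
open Polynomial Finset

/-!
Exchange the roles of `X` and `D`: with `x := D` and `d := -X` one has `[d, x] = 1` and
`L = (d² + V(x))² + W(x)` for `V = x³ + α`, `W = g(g+1)x`, which is Mironov's rank two form. The
endomorphism algebra is a module over `ℂ[z][x]`, with `x` acting by left multiplication and `z` by
right multiplication by `L`, so that `z` plays the role of an eigenvalue of `L`. For `P ∈ ℂ[z][x]`
put `M = 2P d² - 2P' d + P'' + 2VP`. Then `LM = ML` as soon as `P` solves a linear fifth order
equation in `x`, and then `M² = F(z)` for a first integral `F` of that equation. On coefficients the
equation is a recurrence in which `pₛ` carries the factor `s(s+1) - g(g+1)`; hence it can be solved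
downwards from `p_g = 1`, and the solution has total degree `g`. Since `z` stands for an operator of
order six and `x` for one of order one, the top terms of `M` and `F` come from `p₀`, which has
degree `g` in `z`.
-/

section LeftRightAction

variable {K R : Type*} [CommRing K] [Ring R] [Algebra K R]

/-- The compatibility of a `K[z][x]`-module structure on `R` with a pair `x, L : R`: the outer
variable acts by left multiplication by `x`, a polynomial `p(z)` by right multiplication by `p(L)`.
Thus `(∑ pₛ(z) xˢ) • T = ∑ xˢ T pₛ(L)`, although `x` and `L` need not commute. -/
structure IsLeftRightAction [Module K[X][X] R] (x L : R) : Prop where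
  X_smul : ∀ T : R, (X : K[X][X]) • T = x * T
  C_smul : ∀ (p : K[X]) (T : R), (C p : K[X][X]) • T = T * aeval L p

/-- Right multiplication by `p(L)`, as a ring homomorphism in `p`. -/
noncomputable def mulRightAeval (L : R) : K[X] →+* Module.End K R where
  toFun p := LinearMap.mulRight K (aeval L p)
  map_one' := by simp [Module.End.one_eq_id]
  map_mul' p q := by rw [mul_comm, map_mul, LinearMap.mulRight_mul, Module.End.mul_eq_comp]
  map_zero' := by simp
  map_add' p q := by rw [map_add]; exact map_add (LinearMap.mul K R).flip _ _

/-- The ring homomorphism `∑ pₛ(z) xˢ ↦ (T ↦ ∑ xˢ T pₛ(L))`. -/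
noncomputable def leftRightEval (x L : R) : K[X][X] →+* Module.End K R :=
  eval₂RingHom' (mulRightAeval L) (LinearMap.mulLeft K x)
    fun p ↦ (LinearMap.commute_mulLeft_right (R := K) x (aeval L p)).symm

/-- The `K[z][x]`-module structure on `R` satisfying `IsLeftRightAction x L`. It is not an instance,
since it depends on the pair `x, L`. -/
noncomputable abbrev leftRightModule (x L : R) : Module K[X][X] R :=
  Module.compHom R (leftRightEval x L)

theorem isLeftRightAction_leftRightModule (x L : R) :
    letI : Module K[X][X] R := leftRightModule x L
    IsLeftRightAction (K := K) x L :=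
  letI : Module K[X][X] R := leftRightModule x L
  { X_smul T := show leftRightEval (K := K) x L X T = x * T by
      simp [leftRightEval, eval₂RingHom']
    C_smul p T := show leftRightEval x L (C p) T = T * aeval L p by
      simp [leftRightEval, mulRightAeval] }

namespace IsLeftRightAction

variable [Module K[X][X] R] {x L : R} (h : IsLeftRightAction (K := K) x L)
include h

theorem C_X_smul (T : R) : (C X : K[X][X]) • T = T * L := by
  rw [h.C_smul, aeval_X]

theorem X_pow_smul (n : ℕ) (T : R) : (X ^ n : K[X][X]) • T = x ^ n * T := by
  induction n generalizing T with
  | zero => simp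
  | succ n ih => rw [pow_succ, mul_smul, h.X_smul, ih, pow_succ, mul_assoc]

theorem map_C_smul (V : K[X]) (T : R) : V.map C • T = aeval x V * T := by
  induction V using Polynomial.induction_on' with
  | add p q hp hq => rw [Polynomial.map_add, add_smul, hp, hq, map_add, add_mul]
  | monomial n a =>
    rw [map_monomial, ← C_mul_X_pow_eq_monomial, mul_smul, h.X_pow_smul, h.C_smul, aeval_C,
      ← Algebra.commutes, aeval_monomial, mul_assoc]

theorem smul_eq_sum (f : K[X][X]) (T : R) :
    f • T = ∑ s ∈ f.support, x ^ s * T * aeval L (f.coeff s) := by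
  conv_lhs => rw [f.as_sum_support_C_mul_X_pow, Finset.sum_smul]
  simp only [mul_smul, h.X_pow_smul, h.C_smul]

theorem mul_smul_of_weyl {d : R} (hdx : d * x = x * d + 1) (f : K[X][X]) (T : R) :
    d * (f • T) = f • (d * T) + derivative f • T := by
  induction f using Polynomial.induction_on generalizing T with
  | C p => rw [h.C_smul, h.C_smul, derivative_C, zero_smul, add_zero, mul_assoc]
  | add p q hp hq => rw [add_smul, mul_add, hp, hq, derivative_add, add_smul, add_smul]; abel
  | monomial n p ih =>
    rw [pow_succ, ← mul_assoc]
    generalize C p * X ^ n = f at ih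
    rw [derivative_mul, derivative_X, mul_one, add_smul, mul_smul, mul_smul, mul_smul, ih,
      h.X_smul, h.X_smul, ← mul_assoc d, hdx, add_mul, one_mul, smul_add, mul_assoc]
    abel

theorem smul_mul_of_commute {U : R} (hU : Commute L U) (f : K[X][X]) (T : R) :
    (f • T) * U = f • (T * U) := by
  have hcomm (p : K[X]) : Commute (aeval L p) U := by
    induction p using Polynomial.induction_on' with
    | add p q hp hq => rw [map_add]; exact hp.add_left hq
    | monomial n a =>
      rw [aeval_monomial]
      exact (Algebra.commute_algebraMap_left a U).mul_left (hU.pow_left n)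
  simp only [h.smul_eq_sum, Finset.sum_mul, mul_assoc, (hcomm _).eq]

end IsLeftRightAction

end LeftRightAction

section Mironov

variable {K : Type*} [CommRing K]

/-- Left-hand side of Mironov's equation
`P⁽⁵⁾ + 4VP''' + 6V'P'' + 2(2z - 2W + V'')P' - 2W'P = 0` for `P ∈ K[z][x]`, where `V, W ∈ K[x]`
are the potentials of `(∂² + V)² + W` and primes are derivatives in `x`. -/
noncomputable def mironovODE (V W : K[X]) (P : K[X][X]) : K[X][X] :=
  derivative^[5] P + 4 * V.map C * derivative^[3] P + 6 * derivative (V.map C) * derivative^[2] P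
    + 2 * (2 * C X - 2 * W.map C + derivative^[2] (V.map C)) * derivative P
    - 2 * derivative (W.map C) * P

/-- The first integral of Mironov's equation. On a solution it depends on `z` alone, and
`w² = spectralPoly V W P` is then the spectral curve of the commuting pair. -/
noncomputable def spectralPoly (V W : K[X]) (P : K[X][X]) : K[X][X] :=
  4 * (C X - W.map C) * P ^ 2 + 2 * P * derivative^[4] P + 8 * V.map C * P * derivative^[2] P
    + 4 * derivative (V.map C) * P * derivative P - 2 * derivative P * derivative^[3] P
    - 4 * V.map C * derivative P ^ 2 + derivative^[2] P ^ 2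

theorem mironovODE_smul (V W : K[X]) (r : K) (P : K[X][X]) :
    mironovODE V W (r • P) = r • mironovODE V W P := by
  simp only [mironovODE, iterate_derivative_smul, derivative_smul, mul_smul_comm, smul_add,
    smul_sub]

theorem derivative_spectralPoly (V W : K[X]) (P : K[X][X]) :
    derivative (spectralPoly V W P) = 2 * P * mironovODE V W P := by
  simp only [spectralPoly, mironovODE, Function.iterate_succ, Function.iterate_zero,
    Function.comp_apply, id_eq, derivative_add, derivative_sub, derivative_mul, derivative_sq,
    derivative_C, derivative_ofNat, map_ofNat]
  ring

theorem spectralPoly_eq_C [IsDomain K] [CharZero K] {V W : K[X]} {P : K[X][X]}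
    (hP : mironovODE V W P = 0) :
    spectralPoly V W P = C ((spectralPoly V W P).coeff 0) :=
  eq_C_of_derivative_eq_zero <| by rw [derivative_spectralPoly, hP, mul_zero]

variable {R : Type*} [Ring R] [Module K[X][X] R]

/-- The operator `2P∂² - 2P'∂ + P'' + 2VP` attached to `P ∈ K[z][x]`, with `z` acting as
multiplication by `L` on the right. -/
noncomputable def mironovOp (d : R) (V : K[X]) (P : K[X][X]) : R :=
  (2 * P) • (d * d) - (2 * derivative P) • d
    + (derivative^[2] P + 2 * V.map C * P) • (1 : R)

variable [Algebra K R] {x d L : R} {V W : K[X]} {P : K[X][X]}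

theorem schrodinger_sq_add_mul (h : IsLeftRightAction (K := K) x L) (hdx : d * x = x * d + 1)
    (hL : L = (d ^ 2 + aeval x V) ^ 2 + aeval x W) (T : R) :
    L * T = d * (d * (d * (d * T))) + (2 * V.map C) • (d * (d * T))
      + (2 * derivative (V.map C)) • (d * T)
      + (derivative^[2] (V.map C) + V.map C ^ 2 + W.map C) • T := by
  have hH (T : R) : (d ^ 2 + aeval x V) * T = d * (d * T) + V.map C • T := by
    rw [h.map_C_smul, add_mul, sq, mul_assoc]
  have hLT : L * T = d * (d * (d * (d * T) + V.map C • T))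
      + V.map C • (d * (d * T) + V.map C • T) + W.map C • T := by
    rw [← hH, ← hH, h.map_C_smul W, ← mul_assoc, ← sq, ← add_mul, ← hL]
  rw [hLT]
  simp only [mul_add, h.mul_smul_of_weyl hdx, Function.iterate_succ, Function.iterate_zero,
    Function.comp_apply, id_eq]
  module

theorem pow_four_eq (h : IsLeftRightAction (K := K) x L) (hdx : d * x = x * d + 1)
    (hL : L = (d ^ 2 + aeval x V) ^ 2 + aeval x W) :
    d * (d * (d * d)) = (C X - derivative^[2] (V.map C) - V.map C ^ 2 - W.map C) • (1 : R)
      - (2 * V.map C) • (d * d) - (2 * derivative (V.map C)) • d := by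
  have hz : (C X : K[X][X]) • (1 : R) = L * 1 := by rw [h.C_X_smul, one_mul, mul_one]
  rw [schrodinger_sq_add_mul h hdx hL] at hz
  simp only [mul_one] at hz
  simp only [sub_smul, hz]
  module

theorem commute_mironovOp (h : IsLeftRightAction (K := K) x L) (hdx : d * x = x * d + 1)
    (hL : L = (d ^ 2 + aeval x V) ^ 2 + aeval x W) (hP : mironovODE V W P = 0) :
    Commute L (mironovOp d V P) := by
  have hP' : derivative (mironovODE V W P) = 0 := by rw [hP, derivative_zero]
  rw [Commute, SemiconjBy, ← h.C_X_smul, schrodinger_sq_add_mul h hdx hL, mironovOp]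
  simp only [mironovODE, Function.iterate_succ, Function.iterate_zero, Function.comp_apply, id_eq,
    h.mul_smul_of_weyl hdx, mul_add, mul_sub, mul_one, pow_four_eq h hdx hL,
    derivative_add, derivative_sub, derivative_mul, derivative_sq, derivative_C, derivative_ofNat,
    derivative_zero, map_ofNat] at hP hP' ⊢
  match_scalars
  · ring
  · linear_combination 2 * hP
  · linear_combination hP'
  · ring

theorem mironovOp_sq (h : IsLeftRightAction (K := K) x L) (hdx : d * x = x * d + 1)
    (hL : L = (d ^ 2 + aeval x V) ^ 2 + aeval x W) (hP : mironovODE V W P = 0) :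
    mironovOp d V P ^ 2 = spectralPoly V W P • (1 : R) := by
  set M := mironovOp d V P with hM
  have hMM : M ^ 2 = (2 * P) • (d * (d * M)) - (2 * derivative P) • (d * M)
      + (derivative^[2] P + 2 * V.map C * P) • M := by
    have hsmul (f : K[X][X]) (T : R) : (f • T) * M = f • (T * M) :=
      h.smul_mul_of_commute (commute_mironovOp h hdx hL hP) f T
    nth_rw 1 [sq, hM, mironovOp, add_mul, sub_mul, hsmul, hsmul, hsmul, one_mul, mul_assoc]
  rw [hMM, hM, mironovOp]
  simp only [spectralPoly, Function.iterate_succ, Function.iterate_zero, Function.comp_apply, id_eq,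
    h.mul_smul_of_weyl hdx, mul_add, mul_sub, mul_one, pow_four_eq h hdx hL,
    derivative_add, derivative_mul, derivative_ofNat, derivative_zero]
  match_scalars <;> ring

theorem mironovOp_sq_eq_aeval [IsDomain K] [CharZero K] (h : IsLeftRightAction (K := K) x L)
    (hdx : d * x = x * d + 1) (hL : L = (d ^ 2 + aeval x V) ^ 2 + aeval x W)
    (hP : mironovODE V W P = 0) :
    mironovOp d V P ^ 2 = aeval L ((spectralPoly V W P).coeff 0) := by
  rw [mironovOp_sq h hdx hL hP, spectralPoly_eq_C hP, h.C_smul, one_mul, coeff_C_zero]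

end Mironov

section TotalDegree

variable {K : Type*} [CommRing K] {n : ℕ} {f : K[X][X]}

variable (K) in
/-- Polynomials in `K[z][x]` of total degree at most `n`. -/
def totalDegreeLE (n : ℕ) : Submodule K K[X][X] where
  carrier := {f | ∀ s t, n < s + t → (f.coeff s).coeff t = 0}
  add_mem' hf hg s t h := by simp [hf s t h, hg s t h]
  zero_mem' := by simp
  smul_mem' c f hf s t h := by simp [hf s t h]

theorem add_natDegree_coeff_le (hf : f ∈ totalDegreeLE K n) {s : ℕ} (hs : f.coeff s ≠ 0) :
    s + (f.coeff s).natDegree ≤ n :=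
  not_lt.1 fun hlt ↦ leadingCoeff_ne_zero.2 hs (hf _ _ hlt)

theorem two_mul_mem_totalDegreeLE (hf : f ∈ totalDegreeLE K n) : 2 * f ∈ totalDegreeLE K n := by
  rw [two_mul]
  exact add_mem hf hf

theorem derivative_mem_totalDegreeLE (hf : f ∈ totalDegreeLE K n) :
    derivative f ∈ totalDegreeLE K n := by
  intro s t hst
  have hmul : (s + 1 : K[X]) = C (s + 1 : K) := by simp
  rw [coeff_derivative, hmul, coeff_mul_C, hf _ _ (by lia), zero_mul]

theorem isMonicOfDegree_spectralPoly_coeff_zero [Nontrivial K] (V W : K[X]) {P : K[X][X]}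
    (hP : P ∈ totalDegreeLE K n) (hP₀ : IsMonicOfDegree (2 * P.coeff 0) n) :
    IsMonicOfDegree ((spectralPoly V W P).coeff 0) (2 * n + 1) := by
  have hmul (i j : ℕ) : P.coeff i * P.coeff j ∈ degreeLE K (2 * n : ℕ) := by
    have hdeg (s : ℕ) : (P.coeff s).natDegree ≤ n :=
      natDegree_le_iff_coeff_eq_zero.2 fun t ht ↦ hP s t (by lia)
    rw [mem_degreeLE, ← natDegree_le_iff_degree_le, two_mul]
    exact natDegree_mul_le_of_le (hdeg i) (hdeg j)
  have hcoeff : (spectralPoly V W P).coeff 0 = X * (2 * P.coeff 0) ^ 2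
      + ((48 : K) • (P.coeff 0 * P.coeff 4) + (16 * V.coeff 0) • (P.coeff 0 * P.coeff 2)
        + (4 * V.coeff 1) • (P.coeff 0 * P.coeff 1) - (12 : K) • (P.coeff 1 * P.coeff 3)
        - (4 * V.coeff 0) • (P.coeff 1 * P.coeff 1) + (4 : K) • (P.coeff 2 * P.coeff 2)
        - (4 * W.coeff 0) • (P.coeff 0 * P.coeff 0)) := by
    simp only [spectralPoly, coeff_add, coeff_sub, mul_coeff_zero, coeff_derivative, pow_two,
      Function.iterate_succ, Function.iterate_zero, Function.comp_apply, id_eq, coeff_C_zero,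
      coeff_map, coeff_ofNat_zero, smul_eq_C_mul, map_mul, map_ofNat]
    push_cast
    ring
  rw [hcoeff, show 2 * n + 1 = 1 + n * 2 by ring]
  refine ((isMonicOfDegree_X K).mul (hP₀.pow 2)).add_right ?_
  rw [show 1 + n * 2 = 2 * n + 1 by ring, Nat.lt_succ_iff, natDegree_le_iff_degree_le,
    ← mem_degreeLE]
  exact sub_mem (add_mem (sub_mem (sub_mem (add_mem (add_mem
    (Submodule.smul_mem _ _ (hmul 0 4)) (Submodule.smul_mem _ _ (hmul 0 2)))
    (Submodule.smul_mem _ _ (hmul 0 1))) (Submodule.smul_mem _ _ (hmul 1 3)))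
    (Submodule.smul_mem _ _ (hmul 1 1))) (Submodule.smul_mem _ _ (hmul 2 2)))
    (Submodule.smul_mem _ _ (hmul 0 0))

end TotalDegree

section DifferentialOperators

variable {K : Type*} [CommRing K]

variable (K) in
/-- Differential operators of order less than `n` on `K[X]` with polynomial coefficients. The
`K[X]`-module structure on `Module.End K K[X]` is `p • T = p · T(-)`. -/
noncomputable def orderLT (n : ℕ) : Submodule K[X] (Module.End K K[X]) :=
  Submodule.span K[X] ((derivative ^ ·) '' (range n : Set ℕ))

theorem mem_orderLT_iff {n : ℕ} {T : Module.End K K[X]} :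
    T ∈ orderLT K n ↔ ∃ P : ℕ → K[X], ∑ j ∈ range n, P j • derivative ^ j = T :=
  Submodule.mem_span_image_finset_iff_exists_fun' _

theorem orderLT_mono {m n : ℕ} (h : m ≤ n) : orderLT K m ≤ orderLT K n :=
  Submodule.span_mono <| Set.image_mono <| by simpa using h

theorem derivative_pow_mem_orderLT {j n : ℕ} (h : j < n) :
    (derivative ^ j : Module.End K K[X]) ∈ orderLT K n :=
  Submodule.subset_span ⟨j, by simpa using h, rfl⟩

theorem one_mem_orderLT_one : (1 : Module.End K K[X]) ∈ orderLT K 1 :=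
  derivative_pow_mem_orderLT zero_lt_one

theorem mulLeft_mem_orderLT_one (p : K[X]) : LinearMap.mulLeft K p ∈ orderLT K 1 := by
  have hp : LinearMap.mulLeft K p = p • (1 : Module.End K K[X]) := rfl
  exact hp ▸ Submodule.smul_mem _ p one_mem_orderLT_one

theorem derivative_mul_smul (p : K[X]) (T : Module.End K K[X]) :
    derivative * (p • T) = p • (derivative * T) + derivative p • T := by
  refine LinearMap.ext fun q ↦ ?_
  simp only [Module.End.mul_apply, LinearMap.smul_apply, LinearMap.add_apply, smul_eq_mul,
    derivative_mul]
  ring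

theorem derivative_mul_mem_orderLT {n : ℕ} {T : Module.End K K[X]} (hT : T ∈ orderLT K n) :
    derivative * T ∈ orderLT K (n + 1) := by
  obtain ⟨P, rfl⟩ := mem_orderLT_iff.1 hT
  rw [Finset.mul_sum]
  refine Submodule.sum_mem _ fun j hj ↦ ?_
  have hj := Finset.mem_range.1 hj
  rw [derivative_mul_smul, ← pow_succ']
  exact add_mem (Submodule.smul_mem _ _ (derivative_pow_mem_orderLT (by lia)))
    (Submodule.smul_mem _ _ (derivative_pow_mem_orderLT (by lia)))

theorem derivative_pow_mul_mem_orderLT (k : ℕ) {n : ℕ} {T : Module.End K K[X]}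
    (hT : T ∈ orderLT K n) : derivative ^ k * T ∈ orderLT K (n + k) := by
  induction k with
  | zero => simpa using hT
  | succ k ih => rw [pow_succ', mul_assoc]; exact derivative_mul_mem_orderLT ih

theorem mul_mem_orderLT {m n : ℕ} {S T : Module.End K K[X]} (hS : S ∈ orderLT K m)
    (hT : T ∈ orderLT K n) : S * T ∈ orderLT K (m + n - 1) := by
  obtain ⟨P, rfl⟩ := mem_orderLT_iff.1 hS
  rw [Finset.sum_mul]
  refine Submodule.sum_mem _ fun j hj ↦ ?_
  have hj := Finset.mem_range.1 hj
  rw [smul_mul_assoc]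
  exact Submodule.smul_mem _ _ (orderLT_mono (by lia) (derivative_pow_mul_mem_orderLT j hT))

/-- `T` is a differential operator of order `n` with leading coefficient `1`. -/
def IsMonicOfOrder (T : Module.End K K[X]) (n : ℕ) : Prop :=
  T - derivative ^ n ∈ orderLT K n

namespace IsMonicOfOrder

variable {S T : Module.End K K[X]} {m n : ℕ}

theorem mem_orderLT (hT : IsMonicOfOrder T n) : T ∈ orderLT K (n + 1) := by
  rw [← sub_add_cancel T (derivative ^ n)]
  exact add_mem (orderLT_mono n.le_succ hT) (derivative_pow_mem_orderLT n.lt_succ_self)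

theorem exists_eq_sum (hT : IsMonicOfOrder T n) :
    ∃ P : ℕ → K[X], P n = 1 ∧ T = ∑ j ∈ range (n + 1), P j • derivative ^ j := by
  obtain ⟨P, hP⟩ := mem_orderLT_iff.1 hT
  refine ⟨Function.update P n 1, Function.update_self .., ?_⟩
  rw [Finset.sum_range_succ, Function.update_self, one_smul, ← sub_eq_iff_eq_add, ← hP]
  refine Finset.sum_congr rfl fun j hj ↦ ?_
  rw [Function.update_of_ne (Finset.mem_range.1 hj).ne]

theorem add_right (hT : IsMonicOfOrder T n) (hS : S ∈ orderLT K n) : IsMonicOfOrder (T + S) n := by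
  rw [IsMonicOfOrder, add_sub_right_comm]
  exact add_mem hT hS

theorem mul (hS : IsMonicOfOrder S m) (hT : IsMonicOfOrder T n) :
    IsMonicOfOrder (S * T) (m + n) := by
  have hST : S * T - derivative ^ (m + n)
      = (S - derivative ^ m) * T + derivative ^ m * (T - derivative ^ n) := by
    rw [pow_add, sub_mul, mul_sub]; abel
  rw [IsMonicOfOrder, hST]
  exact add_mem (orderLT_mono (by lia) (mul_mem_orderLT hS hT.mem_orderLT))
    (orderLT_mono (by lia) (derivative_pow_mul_mem_orderLT m hT))

theorem derivative_pow (n : ℕ) : IsMonicOfOrder (derivative ^ n : Module.End K K[X]) n := by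
  simp [IsMonicOfOrder]

theorem pow (hT : IsMonicOfOrder T n) (k : ℕ) : IsMonicOfOrder (T ^ k) (n * k) := by
  induction k with
  | zero => exact derivative_pow 0
  | succ k ih => rw [pow_succ]; exact ih.mul hT

end IsMonicOfOrder

theorem aeval_eq_pow_add_sum {A : Type*} [Ring A] [Algebra K A] {p : K[X]} {n : ℕ}
    (hp : IsMonicOfDegree p n) (a : A) :
    aeval a p = a ^ n + ∑ i ∈ range n, p.coeff i • a ^ i := by
  conv_lhs => rw [hp.monic.as_sum, hp.natDegree_eq]
  simp [Algebra.smul_def]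

section Aeval

variable {L : Module.End K K[X]} {N : ℕ} (hL : IsMonicOfOrder L N)
include hL

theorem aeval_mem_orderLT (p : K[X]) : aeval L p ∈ orderLT K (N * p.natDegree + 1) := by
  rw [aeval_eq_sum_range]
  refine Submodule.sum_mem _ fun i hi ↦ Submodule.smul_of_tower_mem _ _ ?_
  have hi : i ≤ p.natDegree := Finset.mem_range_succ_iff.1 hi
  exact orderLT_mono (by gcongr) (hL.pow i).mem_orderLT

theorem isMonicOfOrder_aeval (hN : 1 ≤ N) {p : K[X]} {n : ℕ} (hp : IsMonicOfDegree p n) :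
    IsMonicOfOrder (aeval L p) (N * n) := by
  rw [aeval_eq_pow_add_sum hp]
  refine (hL.pow n).add_right <| Submodule.sum_mem _ fun i hi ↦ Submodule.smul_of_tower_mem _ _ ?_
  have hi : i < n := Finset.mem_range.1 hi
  exact orderLT_mono (by nlinarith) (hL.pow i).mem_orderLT

end Aeval

theorem isMonicOfOrder_aeval_derivative {p : K[X]} {n : ℕ} (hp : IsMonicOfDegree p n) :
    IsMonicOfOrder (aeval (derivative : Module.End K K[X]) p) n := by
  simpa using isMonicOfOrder_aeval (IsMonicOfOrder.derivative_pow 1) le_rfl hp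

section Action

variable {L : Module.End K K[X]} {N : ℕ} (hL : IsMonicOfOrder L N)
  [Module K[X][X] (Module.End K K[X])] (h : IsLeftRightAction (K := K) derivative L)
include hL h

theorem smul_mem_orderLT {f : K[X][X]} {m n : ℕ} {T : Module.End K K[X]}
    (hf : ∀ s, f.coeff s ≠ 0 → s + N * (f.coeff s).natDegree < m) (hT : T ∈ orderLT K (n + 1)) :
    f • T ∈ orderLT K (m + n) := by
  rw [h.smul_eq_sum]
  refine Submodule.sum_mem _ fun s hs ↦ orderLT_mono ?_ <|
    mul_mem_orderLT (derivative_pow_mul_mem_orderLT s hT) (aeval_mem_orderLT hL (f.coeff s))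
  have := hf s (mem_support_iff.1 hs)
  lia

theorem smul_mem_orderLT_of_mem_totalDegreeLE (hN : 1 ≤ N) {f : K[X][X]} {n : ℕ}
    (hf : f ∈ totalDegreeLE K n) {T : Module.End K K[X]} (hT : T ∈ orderLT K 1) :
    f • T ∈ orderLT K (N * n + 1) := by
  refine smul_mem_orderLT hL h (n := 0) (fun s hs ↦ ?_) hT
  have := add_natDegree_coeff_le hf hs
  nlinarith

theorem isMonicOfOrder_smul_one (hN : 2 ≤ N) {f : K[X][X]} {n : ℕ} (hf : f ∈ totalDegreeLE K n)
    (hf₀ : IsMonicOfDegree (f.coeff 0) n) :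
    IsMonicOfOrder (f • (1 : Module.End K K[X])) (N * n) := by
  have hlow : (f - C (f.coeff 0)) • (1 : Module.End K K[X]) ∈ orderLT K (N * n + 0) := by
    refine smul_mem_orderLT hL h (fun s hs ↦ ?_) one_mem_orderLT_one
    rcases eq_or_ne s 0 with rfl | hs₀
    · simp at hs
    · rw [coeff_sub, coeff_C_of_ne_zero hs₀, sub_zero] at hs ⊢
      have := add_natDegree_coeff_le hf hs
      nlinarith [s.pos_of_ne_zero hs₀]
  rw [← add_sub_cancel (C (f.coeff 0)) f, add_smul, h.C_smul, one_mul]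
  exact (isMonicOfOrder_aeval hL (by lia) hf₀).add_right hlow

theorem isMonicOfOrder_mironovOp (hN : 2 ≤ N) {d : Module.End K K[X]} (hd : d ∈ orderLT K 1)
    {V : K[X]} {m : ℕ} (hV : IsMonicOfDegree V m) (hm : 1 ≤ m) {P : K[X][X]} {n : ℕ}
    (hP : P ∈ totalDegreeLE K n) (hP₀ : IsMonicOfDegree (2 * P.coeff 0) n) :
    IsMonicOfOrder (mironovOp d V P) (N * n + m) := by
  have hP' : derivative P ∈ totalDegreeLE K n := derivative_mem_totalDegreeLE hP
  have hP'' : derivative^[2] P ∈ totalDegreeLE K n := derivative_mem_totalDegreeLE hP'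
  have hdd : d * d ∈ orderLT K 1 := by simpa using mul_mem_orderLT hd hd
  have hlead : IsMonicOfOrder ((2 * V.map C * P) • (1 : Module.End K K[X])) (N * n + m) := by
    have h2P : IsMonicOfDegree ((2 * P).coeff 0) n := by rwa [coeff_ofNat_mul]
    rw [show 2 * V.map C * P = V.map C * (2 * P) by ring, mul_smul, h.map_C_smul, add_comm]
    exact (isMonicOfOrder_aeval_derivative hV).mul
      (isMonicOfOrder_smul_one hL h hN (two_mul_mem_totalDegreeLE hP) h2P)
  have hlow : (2 * P) • (d * d) - (2 * derivative P) • d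
      + derivative^[2] P • (1 : Module.End K K[X]) ∈ orderLT K (N * n + 1) := by
    have hsmul {f : K[X][X]} (hf : f ∈ totalDegreeLE K n) {T : Module.End K K[X]}
        (hT : T ∈ orderLT K 1) : f • T ∈ orderLT K (N * n + 1) :=
      smul_mem_orderLT_of_mem_totalDegreeLE hL h (by lia) hf hT
    exact add_mem (sub_mem (hsmul (two_mul_mem_totalDegreeLE hP) hdd)
      (hsmul (two_mul_mem_totalDegreeLE hP') hd))
      (hsmul hP'' one_mem_orderLT_one)
  rw [mironovOp, add_smul, ← add_assoc, add_comm]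
  exact hlead.add_right (orderLT_mono (by lia) hlow)

end Action

end DifferentialOperators

theorem coeff_X_mul_derivative {A : Type*} [CommSemiring A] (f : A[X]) (s : ℕ) :
    (X * derivative f).coeff s = s * f.coeff s := by
  cases s with
  | zero => simp
  | succ s => rw [coeff_X_mul, coeff_derivative, mul_comm]; norm_cast

section MironovRecurrence

variable {K : Type*} [CommRing K]

/-- The coefficient of `pₛ` in the recurrence to which Mironov's equation with potentials
`V = x³ + α`, `W = cx` reduces for `P = ∑ pₛ(z) xˢ`. -/
def recurrenceHead (c : K) (s : ℕ) : K :=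
  2 * (2 * s + 1) * (s * (s + 1) - c)

/-- The terms of that recurrence in `p = pₛ₊₁`, `q = pₛ₊₃`, `r = pₛ₊₅`. -/
noncomputable def recurrenceTail (α : K) (s : ℕ) (p q r : K[X]) : K[X] :=
  (4 * (s + 1) : K) • (X * p) + (4 * α * ((s + 1) * (s + 2) * (s + 3))) • q
    + ((s + 1) * (s + 2) * (s + 3) * (s + 4) * (s + 5) : K) • r

theorem recurrenceTail_coeff_succ (α : K) (s : ℕ) (p q r : K[X]) (t : ℕ) :
    (recurrenceTail α s p q r).coeff (t + 1) = 4 * (s + 1) * p.coeff t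
      + 4 * α * ((s + 1) * (s + 2) * (s + 3)) * q.coeff (t + 1)
      + (s + 1) * (s + 2) * (s + 3) * (s + 4) * (s + 5) * r.coeff (t + 1) := by
  simp only [recurrenceTail, coeff_add, coeff_smul, coeff_X_mul, smul_eq_mul]

theorem mironovODE_coeff (α c : K) (P : K[X][X]) (s : ℕ) :
    (mironovODE (X ^ 3 + C α) (C c * X) P).coeff s = recurrenceHead c s • P.coeff s
      + recurrenceTail α s (P.coeff (s + 1)) (P.coeff (s + 3)) (P.coeff (s + 5)) := by
  have hEuler : mironovODE (X ^ 3 + C α) (C c * X) P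
      = derivative^[5] P + 4 * (C (C α) * derivative^[3] P) + 4 * (C X * derivative P)
        + (4 * (X * derivative (X * derivative (X * derivative P)))
          + 6 * (X * derivative (X * derivative P)) + 2 * (X * derivative P))
        - 4 * (C (C c) * (X * derivative P)) - 2 * (C (C c) * P) := by
    simp only [mironovODE, Polynomial.map_add, Polynomial.map_mul, Polynomial.map_pow, map_X, map_C,
      Function.iterate_succ, Function.iterate_zero, Function.comp_apply, id_eq, derivative_add,
      derivative_mul, derivative_X, derivative_X_pow, derivative_C, derivative_zero,
      derivative_one, derivative_ofNat, Nat.cast_ofNat, map_ofNat, Nat.reduceSub]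
    ring
  rw [hEuler]
  simp only [coeff_add, coeff_sub, coeff_C_mul, coeff_ofNat_mul, coeff_X_mul_derivative,
    coeff_derivative, Function.iterate_succ, Function.iterate_zero, Function.comp_apply, id_eq,
    recurrenceHead, recurrenceTail, smul_eq_C_mul, map_mul, map_add, map_sub, map_ofNat,
    map_natCast, map_one]
  push_cast
  ring

end MironovRecurrence

section MironovSolution

variable {K : Type*} [Field K]

theorem recurrenceHead_ne_zero [CharZero K] {g s : ℕ} (hs : s < g) :
    recurrenceHead (g * (g + 1) : K) s ≠ 0 := by
  have h₁ : (2 * (2 * s + 1) : K) ≠ 0 := by norm_cast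
  have h₂ : ((s * (s + 1) : ℕ) : K) ≠ (g * (g + 1) : ℕ) := by
    refine Nat.cast_injective.ne (ne_of_lt ?_)
    gcongr
  push_cast at h₂
  exact mul_ne_zero h₁ (sub_ne_zero.2 h₂)

/-- The coefficients `pₛ(z)`, normalised by `p_g = 1`, of the solution of degree `g` in `x` of
Mironov's equation with `V = x³ + α`, `W = g(g+1)x`; the recurrence determines them downwards from
`s = g`, where its head vanishes. -/
noncomputable def mironovCoeff (g : ℕ) (α : K) (s : ℕ) : K[X] :=
  if s < g then
    -(recurrenceHead (g * (g + 1) : K) s)⁻¹ • recurrenceTail α s (mironovCoeff g α (s + 1))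
      (mironovCoeff g α (s + 3)) (mironovCoeff g α (s + 5))
  else if s = g then 1 else 0
termination_by g - s

variable (g : ℕ) (α : K)

theorem mironovCoeff_self : mironovCoeff g α g = 1 := by
  rw [mironovCoeff, if_neg (lt_irrefl g), if_pos rfl]

theorem mironovCoeff_of_gt {s : ℕ} (hs : g < s) : mironovCoeff g α s = 0 := by
  rw [mironovCoeff, if_neg hs.not_gt, if_neg hs.ne']

theorem mironovCoeff_recurrence [CharZero K] (s : ℕ) :
    recurrenceHead (g * (g + 1) : K) s • mironovCoeff g α s
      + recurrenceTail α s (mironovCoeff g α (s + 1)) (mironovCoeff g α (s + 3))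
        (mironovCoeff g α (s + 5)) = 0 := by
  rcases lt_or_ge s g with hs | hs
  · conv_lhs => enter [1, 2]; rw [mironovCoeff, if_pos hs]
    rw [neg_smul, smul_neg, smul_inv_smul₀ (recurrenceHead_ne_zero hs), neg_add_cancel]
  · have htail : recurrenceTail α s (mironovCoeff g α (s + 1)) (mironovCoeff g α (s + 3))
        (mironovCoeff g α (s + 5)) = 0 := by
      simp [recurrenceTail, mironovCoeff_of_gt g α (show g < s + 1 by lia),
        mironovCoeff_of_gt g α (show g < s + 3 by lia),
        mironovCoeff_of_gt g α (show g < s + 5 by lia)]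
    rw [htail, add_zero]
    rcases hs.eq_or_lt with rfl | hs
    · simp [recurrenceHead]
    · rw [mironovCoeff_of_gt g α hs, smul_zero]

theorem mironovCoeff_coeff_eq_zero {s t : ℕ} (h : g < s + t) :
    (mironovCoeff g α s).coeff t = 0 := by
  induction s using mironovCoeff.induct g generalizing t with
  | case1 s hs ih₁ ih₃ ih₅ =>
    obtain ⟨t, rfl⟩ : ∃ u, t = u + 1 := Nat.exists_eq_succ_of_ne_zero (by lia)
    rw [mironovCoeff, if_pos hs, coeff_smul, recurrenceTail_coeff_succ, ih₁ (by lia), ih₃ (by lia),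
      ih₅ (by lia)]
    simp only [mul_zero, add_zero, smul_zero]
  | case2 => rw [mironovCoeff_self, coeff_one, if_neg (by lia)]
  | case3 s hs hs' => rw [mironovCoeff_of_gt g α (by lia), coeff_zero]

theorem mironovCoeff_coeff_ne_zero [CharZero K] {s t : ℕ} (h : s + t = g) :
    (mironovCoeff g α s).coeff t ≠ 0 := by
  induction t generalizing s with
  | zero => simp [← h, mironovCoeff_self]
  | succ t ih =>
    have hs : s < g := by lia
    have hcoeff : (mironovCoeff g α s).coeff (t + 1) = -(recurrenceHead (g * (g + 1) : K) s)⁻¹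
        * (4 * (s + 1) * (mironovCoeff g α (s + 1)).coeff t) := by
      rw [mironovCoeff, if_pos hs, coeff_smul, recurrenceTail_coeff_succ,
        mironovCoeff_coeff_eq_zero g α (by lia : g < s + 3 + (t + 1)),
        mironovCoeff_coeff_eq_zero g α (by lia : g < s + 5 + (t + 1))]
      simp only [mul_zero, add_zero, smul_eq_mul]
    have h4 : (4 * (s + 1) : K) ≠ 0 := by norm_cast
    rw [hcoeff]
    exact mul_ne_zero (neg_ne_zero.2 (inv_ne_zero (recurrenceHead_ne_zero hs)))
      (mul_ne_zero h4 (ih (by lia)))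

theorem exists_mironovODE_eq_zero [CharZero K] :
    ∃ P ∈ totalDegreeLE K g, mironovODE (X ^ 3 + C α) (C (g * (g + 1) : K) * X) P = 0 ∧
      IsMonicOfDegree (2 * P.coeff 0) g := by
  set P₁ : K[X][X] := ∑ s ∈ range (g + 1), monomial s (mironovCoeff g α s) with hP₁
  have hcoeff (s : ℕ) : P₁.coeff s = mironovCoeff g α s := by
    simp only [hP₁, finsetSum_coeff, coeff_monomial, Finset.sum_ite_eq', Finset.mem_range]
    split_ifs with hs
    · rfl
    · rw [mironovCoeff_of_gt g α (by lia)]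
  have hdeg : P₁ ∈ totalDegreeLE K g := fun s t hst ↦ by
    rw [hcoeff, mironovCoeff_coeff_eq_zero g α hst]
  set l := (mironovCoeff g α 0).coeff g
  have hl : l ≠ 0 := mironovCoeff_coeff_ne_zero g α (zero_add g)
  refine ⟨(2 * l)⁻¹ • P₁, Submodule.smul_mem _ _ hdeg, ?_, ?_⟩
  · rw [mironovODE_smul]
    convert smul_zero _
    ext1 s
    simp only [mironovODE_coeff, hcoeff, mironovCoeff_recurrence, coeff_zero]
  · have hP₀ : 2 * ((2 * l)⁻¹ • P₁).coeff 0 = l⁻¹ • mironovCoeff g α 0 := by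
      rw [coeff_smul, hcoeff, two_mul, ← add_smul, mul_inv, ← two_mul,
        mul_inv_cancel_left₀ two_ne_zero]
    rw [isMonicOfDegree_iff, natDegree_le_iff_coeff_eq_zero, hP₀]
    refine ⟨fun t ht ↦ ?_, inv_mul_cancel₀ hl⟩
    rw [coeff_smul, mironovCoeff_coeff_eq_zero g α (by lia), smul_zero]

end MironovSolution

section MironovSextic

variable {K : Type*} [CommRing K]

/-- Mironov's operator `(D³ + X² + α)² + cD`. -/
noncomputable def mironovSextic (α c : K) : Module.End K K[X] :=
  (derivative ^ 3 + LinearMap.mulLeft K X ^ 2 + α • 1) ^ 2 + c • derivative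

variable (K) in
/-- The operator `-X`, which differentiates with respect to `D` in the sense that
`[-X, D] = 1`. -/
noncomputable def dualDerivative : Module.End K K[X] :=
  -LinearMap.mulLeft K X

theorem dualDerivative_sq : dualDerivative K ^ 2 = LinearMap.mulLeft K X ^ 2 :=
  neg_sq (R := Module.End K K[X]) (LinearMap.mulLeft K X)

theorem dualDerivative_mul_derivative :
    dualDerivative K * derivative = derivative * dualDerivative K + 1 := by
  refine LinearMap.ext fun q ↦ ?_
  simp [dualDerivative]

theorem dualDerivative_mem_orderLT_one : dualDerivative K ∈ orderLT K 1 :=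
  neg_mem (mulLeft_mem_orderLT_one X)

theorem mironovSextic_eq_schrodinger_sq_add (α c : K) :
    mironovSextic α c = (dualDerivative K ^ 2 + aeval derivative (X ^ 3 + C α)) ^ 2
      + aeval derivative (C c * X) := by
  simp only [mironovSextic, dualDerivative_sq, map_add, map_mul, map_pow, aeval_X, aeval_C,
    Algebra.smul_def, mul_one]
  rw [add_left_comm, add_assoc]

theorem isMonicOfOrder_mironovSextic (α c : K) : IsMonicOfOrder (mironovSextic α c) 6 := by
  have hlow : LinearMap.mulLeft K (X : K[X]) ^ 2 + α • 1 ∈ orderLT K 3 := by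
    rw [LinearMap.pow_mulLeft]
    exact orderLT_mono (by norm_num) <| add_mem (mulLeft_mem_orderLT_one _)
      (Submodule.smul_of_tower_mem _ _ one_mem_orderLT_one)
  have hsq := ((IsMonicOfOrder.derivative_pow 3).add_right hlow).pow 2
  rw [← add_assoc] at hsq
  refine hsq.add_right (Submodule.smul_of_tower_mem _ c ?_)
  simpa using derivative_pow_mem_orderLT (K := K) (by norm_num : 1 < 3 * 2)

end MironovSextic

theorem mironov_rank3_general {K : Type*} [Field K] [CharZero K] (g : ℕ) (α : K) :
    letI L := mironovSextic α ((g : K) * (g + 1))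
    ∃ (M : Module.End K K[X]) (P : ℕ → K[X]) (a : ℕ → K),
      M = ∑ j ∈ range (6 * g + 3 + 1), LinearMap.mulLeft K (P j) * derivative ^ j ∧
      P (6 * g + 3) = 1 ∧
      L * M = M * L ∧
      M ^ 2 = L ^ (2 * g + 1) + ∑ i ∈ range (2 * g + 1), a i • L ^ i := by
  set L := mironovSextic α ((g : K) * (g + 1))
  have hL := mironovSextic_eq_schrodinger_sq_add α ((g : K) * (g + 1))
  have hV : IsMonicOfDegree (X ^ 3 + C α) 3 := (isMonicOfDegree_X_pow K 3).add_right (by simp)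
  let : Module K[X][X] (Module.End K K[X]) := leftRightModule derivative L
  have h : IsLeftRightAction (K := K) derivative L := isLeftRightAction_leftRightModule _ _
  have hdx := dualDerivative_mul_derivative (K := K)
  obtain ⟨P, hPdeg, hP, hP₀⟩ := exists_mironovODE_eq_zero g α
  have hLmonic : IsMonicOfOrder L 6 := isMonicOfOrder_mironovSextic α _
  obtain ⟨Q, hQ, hMQ⟩ := (isMonicOfOrder_mironovOp hLmonic h (by norm_num)
    dualDerivative_mem_orderLT_one hV (by norm_num) hPdeg hP₀).exists_eq_sum
  have hsq := (mironovOp_sq_eq_aeval h hdx hL hP).trans <|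
    aeval_eq_pow_add_sum (isMonicOfDegree_spectralPoly_coeff_zero _ _ hPdeg hP₀) L
  exact ⟨_, Q, _, hMQ, hQ, commute_mironovOp h hdx hL hP, hsq⟩

/-- Mironov's commuting operators of rank 3 and genus `g`: for
`L = (D³ + X² + α)² + g(g+1)D` there is an operator `M` of order `6g + 3` with
polynomial coefficients and constants `a₀, …, a_{2g}` such that `L∘M = M∘L` and
`M² = L^{2g+1} + a_{2g}·L^{2g} + … + a₁·L + a₀`. -/
theorem mironov_rank3 (g : ℕ) (hg : 1 ≤ g) (α : ℂ) (hα : α ≠ 0) :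
    letI one : Module.End ℂ (Polynomial ℂ) := 1
    letI L : Module.End ℂ (Polynomial ℂ) :=
      (Dop ^ 3 + Xop ^ 2 + α • one) ^ 2 + ((g : ℂ) * ((g : ℂ) + 1)) • Dop
    ∃ (M : Module.End ℂ (Polynomial ℂ)) (P : ℕ → Polynomial ℂ) (a : ℕ → ℂ),
      M = ∑ j ∈ Finset.range (6 * g + 3 + 1), LinearMap.mulLeft ℂ (P j) * Dop ^ j ∧
      P (6 * g + 3) ≠ 0 ∧
      L * M = M * L ∧
      M ^ 2 = L ^ (2 * g + 1) + ∑ i ∈ Finset.range (2 * g + 1), a i • L ^ i := by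
  obtain ⟨M, P, a, hM, hP, hLM, hsq⟩ := mironov_rank3_general g α
  exact ⟨M, P, a, hM, hP.trans_ne one_ne_zero, hLM, hsq⟩
end
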